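/- Let T be a paths solution in the graph H of the paths construction and let a transformation sequence of at most b = 2n(κ−1)κ token slides in the discovery token sliding model move the initial configuration S to T. Then: (i) every token that moves performs exactly two token slides and its intermediate vertex is a green connector node; (ii) for each edge-block, T contains all 2n nodes of exactly one edge-gadget of that block; (iii) for each vertex-block, exactly n(κ−1) tokens slide out of the block, all coming from exactly one vertex-gadget of that block. -/

import Mathlib

namespace TokenDiscovery

variable {V : Type*} {α : Type*}

/-- One token slide in the discovery token sliding model: exactly one token
moves from its current vertex to an adjacent vertex (several tokens may share
a vertex during the transformation).  A configuration assigns to every token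
(indexed by `α`) its current vertex. -/
def Step (G : SimpleGraph V) (c c' : α → V) : Prop :=
  ∃ i : α, G.Adj (c i) (c' i) ∧ ∀ j : α, j ≠ i → c' j = c j

/-- `T` is reachable from the initial configuration `c₀` within at most `b`
token slides in the discovery token sliding model: some transformation
sequence of at most `b` token slides moves the tokens from `c₀` to a
configuration with exactly one token on each vertex of `T`. -/
def Reachable (G : SimpleGraph V) (c₀ : α → V) (T : Set V) (b : ℕ) : Prop :=
  ∃ (m : ℕ) (f : ℕ → α → V), m ≤ b ∧ f 0 = c₀ ∧
    (∀ i : ℕ, i < m → Step G (f i) (f (i + 1))) ∧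
    Function.Injective (f m) ∧ Set.range (f m) = T

/-- `T` is reachable from `c₀` within at most `b` token slides in the
(plain) token sliding model: at every moment the tokens occupy pairwise
distinct vertices, and each token slide moves one token along an edge
(necessarily to an unoccupied vertex, since configurations stay injective). -/
def SlidingReachable (G : SimpleGraph V) (c₀ : α → V) (T : Set V) (b : ℕ) : Prop :=
  ∃ (m : ℕ) (f : ℕ → α → V), m ≤ b ∧ f 0 = c₀ ∧
    (∀ i : ℕ, i ≤ m → Function.Injective (f i)) ∧
    (∀ i : ℕ, i < m → Step G (f i) (f (i + 1))) ∧
    Set.range (f m) = T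

end TokenDiscovery

namespace PathsConstruction

/-- Pre-nodes of the paths construction obtained from a Multicolored Clique
instance with `κ` color classes of `n` vertices each.  The vertex `x` of class
`i` is the pair `(i, x) : Fin κ × Fin n`, and its index is `ι(i, x) = x + 1`. -/
inductive PreNode (κ n : ℕ) : Type
  /-- the teal vertex block node `b_i` -/
  | vblock (i : Fin κ)
  /-- the `p`-th node (for `p < n(κ−1)`) of the path vertex-gadget for `(i, x)` -/
  | vnode (i : Fin κ) (x : Fin n) (p : ℕ)
  /-- the gray edge block node `b_{i,j}` (for `i < j`) -/
  | eblock (i j : Fin κ)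
  /-- the `p`-th node (for `p < 2n`) of the path edge-gadget for the edge `(i,x)(j,y)` -/
  | enode (i j : Fin κ) (x y : Fin n) (p : ℕ)
  /-- green connector node for the pair `{i, j}` (with `i < j`); `fromSecond`
  tells whether it is the connector from color `j` (rather than from color `i`),
  and `isIndex` whether it is the index (rather than the remainder) connector -/
  | conn (i j : Fin κ) (fromSecond : Bool) (isIndex : Bool)

variable {κ n : ℕ}

/-- The index (`isIndex = true`) or remainder (`isIndex = false`) connector
node from color `i` to the pair `{i, j}`. -/
def connFor (i j : Fin κ) (isIndex : Bool) : PreNode κ n :=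
  if i < j then PreNode.conn i j false isIndex else PreNode.conn j i true isIndex

variable (G : SimpleGraph (Fin κ × Fin n))

/-- The pre-nodes actually present in the paths construction for the
Multicolored Clique instance `G`. -/
def Valid : PreNode κ n → Prop
  | PreNode.vblock _ => True
  | PreNode.vnode _ _ p => p < n * (κ - 1)
  | PreNode.eblock i j => i < j
  | PreNode.enode i j x y p => i < j ∧ G.Adj (i, x) (j, y) ∧ p < 2 * n
  | PreNode.conn i j _ _ => i < j

/-- Nodes of the paths construction. -/
abbrev Node := {w : PreNode κ n // Valid G w}

/-- The class corresponding to the `g`-th group (0-based) of a path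
vertex-gadget of the vertex-block for `i`: the groups enumerate the classes
different from `i` in increasing order. -/
def classOfGroup (i : Fin κ) (g : ℕ) : ℕ := if g < (i : ℕ) then g else g + 1

/-- The base adjacency relation of the paths construction (to be symmetrized).
Within the group of a path vertex-gadget (or the half of a path edge-gadget)
corresponding to a vertex of index `ι = x + 1`, the first `ι` nodes go to the
index connector and the remaining `n − ι` nodes go to the remainder
connector. -/
def Rel : PreNode κ n → PreNode κ n → Prop := fun a b =>
  (∃ i x p, a = PreNode.vnode i x p ∧ b = PreNode.vnode i x (p + 1)) ∨
  (∃ i x p, a = PreNode.vnode i x p ∧ b = PreNode.vblock i) ∨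
  (∃ (i : Fin κ) (x : Fin n) (p : ℕ) (j : Fin κ), (j : ℕ) = classOfGroup i (p / n) ∧
      p % n ≤ (x : ℕ) ∧ a = PreNode.vnode i x p ∧ b = connFor i j true) ∨
  (∃ (i : Fin κ) (x : Fin n) (p : ℕ) (j : Fin κ), (j : ℕ) = classOfGroup i (p / n) ∧
      (x : ℕ) < p % n ∧ a = PreNode.vnode i x p ∧ b = connFor i j false) ∨
  (∃ i j x y p, a = PreNode.enode i j x y p ∧ b = PreNode.enode i j x y (p + 1)) ∨
  (∃ i j x y p, a = PreNode.enode i j x y p ∧ b = PreNode.eblock i j) ∨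
  (∃ (i j : Fin κ) (x y : Fin n) (p : ℕ), p ≤ (x : ℕ) ∧
      a = PreNode.enode i j x y p ∧ b = connFor i j true) ∨
  (∃ (i j : Fin κ) (x y : Fin n) (p : ℕ), (x : ℕ) < p ∧ p < n ∧
      a = PreNode.enode i j x y p ∧ b = connFor i j false) ∨
  (∃ (i j : Fin κ) (x y : Fin n) (p : ℕ), n ≤ p ∧ p - n ≤ (y : ℕ) ∧
      a = PreNode.enode i j x y p ∧ b = connFor j i true) ∨
  (∃ (i j : Fin κ) (x y : Fin n) (p : ℕ), n ≤ p ∧ (y : ℕ) < p - n ∧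
      a = PreNode.enode i j x y p ∧ b = connFor j i false)

/-- The graph `H` of the paths construction. -/
def H : SimpleGraph (Node G) := SimpleGraph.fromRel (fun a b => Rel a.1 b.1)

/-- The initial configuration: all nodes of all path vertex-gadgets. -/
def initialS : Set (Node G) := {w | ∃ i x p, w.1 = PreNode.vnode i x p}

/-- The nodes of the path vertex-gadget for the vertex `(i, x)`. -/
def vertexGadgetNodes (i : Fin κ) (x : Fin n) : Set (Node G) :=
  {w | ∃ p, w.1 = PreNode.vnode i x p}

/-- The nodes of the path edge-gadget for the edge `(i,x)(j,y)`. -/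
def edgeGadgetNodes (i j : Fin κ) (x y : Fin n) : Set (Node G) :=
  {w | ∃ p, w.1 = PreNode.enode i j x y p}

/-- The gadget nodes: the nodes of all path vertex-gadgets and path
edge-gadgets (that is, all non-block non-connector nodes). -/
def gadgetNodes : Set (Node G) :=
  {w | (∃ i x p, w.1 = PreNode.vnode i x p) ∨ ∃ i j x y p, w.1 = PreNode.enode i j x y p}

/-- A paths solution: a set `T` of nodes with `|T| = |S|` satisfying
conditions (P1)–(P4). -/
def IsPathsSolution (T : Set (Node G)) : Prop :=
  T.ncard = (initialS G).ncard ∧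
  -- (P1): no block or connector node is in `T`
  (∀ w ∈ T, w ∈ gadgetNodes G) ∧
  -- (P2): for each `i`, some node of a path vertex-gadget adjacent to `b_i`
  -- is not in `T`
  (∀ i : Fin κ, ∃ w : Node G, (∃ x p, w.1 = PreNode.vnode i x p) ∧ w ∉ T) ∧
  -- (P3): for each pair `{i,j}`, some node of a path edge-gadget adjacent to
  -- `b_{i,j}` is in `T`
  (∀ i j : Fin κ, i < j → ∃ w : Node G, (∃ x y p, w.1 = PreNode.enode i j x y p) ∧ w ∈ T) ∧
  -- (P4): a gadget node is in `T` iff every gadget node at distance at most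
  -- two from it in the subgraph induced by the gadget nodes is in `T`
  (∀ a : ↥(gadgetNodes G), (a : Node G) ∈ T ↔
      ∀ b : ↥(gadgetNodes G),
        (∃ pw : (SimpleGraph.induce (gadgetNodes G) (H G)).Walk a b, pw.length ≤ 2) →
        (b : Node G) ∈ T)

/-- The Multicolored Clique instance is a yes-instance: there is a clique of
`G` with exactly one vertex from each color class. -/
def MCCYes : Prop :=
  ∃ f : Fin κ → Fin n, ∀ i j : Fin κ, i ≠ j → G.Adj (i, f i) (j, f j)

end PathsConstruction

/-- Every connected component of `K` is a path. -/
def ComponentsArePaths {W : Type*} (K : SimpleGraph W) : Prop :=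
  ∀ C : K.ConnectedComponent, ∃ (N : ℕ) (g : Fin N ≃ C.supp),
    ∀ a b : Fin N, K.Adj (g a : W) (g b : W) ↔ ((a : ℕ) + 1 = (b : ℕ) ∨ (b : ℕ) + 1 = (a : ℕ))

/-- `X` is a modulator to paths of `K`: every connected component of `K − X`
is a path. -/
def IsPathsModulator {W : Type*} (K : SimpleGraph W) (X : Set W) : Prop :=
  ComponentsArePaths (SimpleGraph.induce Xᶜ K)

/-- The modulator to paths number: the minimum size of a modulator to paths. -/
noncomputable def pathsModulatorNumber {W : Type*} (K : SimpleGraph W) : ℕ :=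
  sInf {k | ∃ X : Set W, IsPathsModulator K X ∧ X.ncard = k}


/-! Edge gadgets and vertex gadgets lie in different blocks, and only connectors join different
blocks; so a token ending on an edge gadget makes at least two slides. By (P3) and (P4), `T`
contains a whole edge gadget in each of the `κ(κ−1)/2` edge blocks, hence at least `n(κ−1)κ` tokens
end on edge gadgets, and these already exhaust the budget: each makes exactly two slides, and no
other token moves. By (P2) and (P4), `T` misses a whole vertex gadget in each of the `κ` vertex
blocks; the `n(κ−1)κ` tokens on these gadgets all move, so they are precisely the moving tokens. -/

namespace TokenDiscovery

variable {V α : Type*} {G : SimpleGraph V} {f : ℕ → α → V} {F : Set V} {k m : ℕ} {a : α}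

/-- A transformation sequence of `m` token slides through the configurations `f 0, …, f m`. The
values of `f` beyond `m` are irrelevant. -/
def IsSlideSequence (G : SimpleGraph V) (f : ℕ → α → V) (m : ℕ) : Prop :=
  ∀ i < m, Step G (f i) (f (i + 1))

/-- The times before `m` at which the token `a` slides. -/
def slideTimes (f : ℕ → α → V) (m : ℕ) (a : α) : Set ℕ :=
  {i | i < m ∧ f (i + 1) a ≠ f i a}

/-- The tokens that slide at some time before `m`. -/
def movers (f : ℕ → α → V) (m : ℕ) : Set α :=
  {a | (slideTimes f m a).Nonempty}

theorem Step.adj_of_ne {c c' : α → V} (h : Step G c c') (ha : c' a ≠ c a) :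
    G.Adj (c a) (c' a) := by
  obtain ⟨b, hadj, hstay⟩ := h
  obtain rfl : a = b := by_contra fun hab ↦ ha (hstay a hab)
  exact hadj

theorem Step.eq_of_ne_of_ne {c c' : α → V} {b : α} (h : Step G c c') (ha : c' a ≠ c a)
    (hb : c' b ≠ c b) : a = b := by
  obtain ⟨t, -, hstay⟩ := h
  rw [not_imp_comm.1 (hstay a) ha, not_imp_comm.1 (hstay b) hb]

theorem finite_slideTimes (f : ℕ → α → V) (m : ℕ) (a : α) : (slideTimes f m a).Finite :=
  (Set.finite_lt_nat m).subset fun _ hi ↦ hi.1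

theorem slideTimes_succ_of_eq (h : f (m + 1) a = f m a) :
    slideTimes f (m + 1) a = slideTimes f m a := by
  ext i
  simp only [slideTimes, Set.mem_ofPred_eq, Nat.lt_succ_iff_lt_or_eq]
  grind

theorem slideTimes_succ_of_ne (h : f (m + 1) a ≠ f m a) :
    slideTimes f (m + 1) a = insert m (slideTimes f m a) := by
  ext i
  simp only [slideTimes, Set.mem_ofPred_eq, Set.mem_insert_iff, Nat.lt_succ_iff_lt_or_eq]
  grind

theorem apply_eq_of_notMem_slideTimes {p q : ℕ} (hpq : p ≤ q) (hqm : q ≤ m)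
    (h : ∀ s, p ≤ s → s < q → s ∉ slideTimes f m a) : f q a = f p a := by
  induction q, hpq using Nat.le_induction with
  | base => rfl
  | succ q hpq ih =>
    have hlast : f (q + 1) a = f q a :=
      not_not.1 fun hne ↦ h q hpq q.lt_succ_self ⟨hqm, hne⟩
    exact hlast.trans (ih (q.le_succ.trans hqm) fun s hs hsq ↦ h s hs (hsq.trans q.lt_succ_self))

theorem apply_eq_of_notMem_movers (ha : a ∉ movers f m) : f m a = f 0 a :=
  apply_eq_of_notMem_slideTimes m.zero_le le_rfl fun s _ _ hs ↦ ha ⟨s, hs⟩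

namespace IsSlideSequence

theorem adj (hf : IsSlideSequence G f m) {s : ℕ} (hs : s ∈ slideTimes f m a) :
    G.Adj (f s a) (f (s + 1) a) :=
  (hf s hs.1).adj_of_ne hs.2

theorem pairwise_disjoint_slideTimes (hf : IsSlideSequence G f m) :
    Pairwise (Function.onFun Disjoint (slideTimes f m)) := fun _ _ hab ↦
  Set.disjoint_left.2 fun s ha hb ↦ hab ((hf s ha.1).eq_of_ne_of_ne ha.2 hb.2)

theorem sum_ncard_slideTimes_le [Fintype α] (hf : IsSlideSequence G f m) :
    ∑ a, (slideTimes f m a).ncard ≤ m :=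
  calc ∑ a, (slideTimes f m a).ncard = (⋃ a, slideTimes f m a).ncard := by
        rw [Set.ncard_iUnion_of_finite (finite_slideTimes f m) hf.pairwise_disjoint_slideTimes,
          finsum_eq_sum_of_fintype]
    _ ≤ (Set.Iio m).ncard :=
        Set.ncard_le_ncard (Set.iUnion_subset fun _ _ hi ↦ hi.1) (Set.finite_Iio m)
    _ = m := by rw [Set.ncard_eq_toFinset_card', Set.toFinset_Iio, Nat.card_Iio]

theorem edist_le_ncard_slideTimes (hf : IsSlideSequence G f m) (a : α) :
    G.edist (f 0 a) (f m a) ≤ (slideTimes f m a).ncard := by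
  induction m with
  | zero => simp only [SimpleGraph.edist_self, zero_le]
  | succ m ih =>
    specialize ih fun i hi ↦ hf i (hi.trans m.lt_succ_self)
    by_cases hm : f (m + 1) a = f m a
    · rwa [slideTimes_succ_of_eq hm, hm]
    have hlast : G.edist (f m a) (f (m + 1) a) = 1 :=
      SimpleGraph.edist_eq_one_iff_adj.2 ((hf m m.lt_succ_self).adj_of_ne hm)
    rw [slideTimes_succ_of_ne hm, Set.ncard_insert_of_notMem (fun h ↦ h.1.false)
      (finite_slideTimes f m a), Nat.cast_add, Nat.cast_one, ← hlast]
    exact SimpleGraph.edist_triangle.trans (by gcongr)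

theorem exists_slideTimes_eq_pair (hf : IsSlideSequence G f m)
    (ha : (slideTimes f m a).ncard = 2) :
    ∃ i₁ i₂, i₁ < i₂ ∧ slideTimes f m a = {i₁, i₂} ∧
      G.Adj (f 0 a) (f (i₁ + 1) a) ∧ G.Adj (f (i₁ + 1) a) (f m a) := by
  obtain ⟨i₁, i₂, hlt, hpair⟩ : ∃ i₁ i₂, i₁ < i₂ ∧ slideTimes f m a = {i₁, i₂} := by
    obtain ⟨s, t, hne, hst⟩ := Set.ncard_eq_two.1 ha
    rcases hne.lt_or_gt with h | h
    · exact ⟨s, t, h, hst⟩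
    · exact ⟨t, s, h, hst.trans (Set.pair_comm s t)⟩
  have hmem₁ : i₁ ∈ slideTimes f m a := hpair ▸ Set.mem_insert i₁ _
  have hmem₂ : i₂ ∈ slideTimes f m a := hpair ▸ Set.mem_insert_of_mem i₁ rfl
  have hrest : ∀ s ≠ i₁, s ≠ i₂ → s ∉ slideTimes f m a := fun s h₁ h₂ hs ↦ by
    rw [hpair] at hs
    exact hs.elim h₁ h₂
  have hbefore : f i₁ a = f 0 a := apply_eq_of_notMem_slideTimes i₁.zero_le hmem₁.1.le
    fun s _ _ ↦ hrest s (by omega) (by omega)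
  have hbetween : f i₂ a = f (i₁ + 1) a := apply_eq_of_notMem_slideTimes hlt hmem₂.1.le
    fun s _ _ ↦ hrest s (by omega) (by omega)
  have hafter : f m a = f (i₂ + 1) a := apply_eq_of_notMem_slideTimes hmem₂.1 le_rfl
    fun s _ _ ↦ hrest s (by omega) (by omega)
  exact ⟨i₁, i₂, hlt, hpair, hbefore ▸ hf.adj hmem₁, hafter ▸ hbetween ▸ hf.adj hmem₂⟩

end IsSlideSequence

/-- A transformation sequence that covers a set `F` of vertices, each at distance at least `k` from
the initial position of every token, with no slides to spare: `k * |F|` of them are needed. -/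
structure IsTightCover (G : SimpleGraph V) (F : Set V) (k : ℕ) (f : ℕ → α → V) (m : ℕ) :
    Prop where
  isSlideSequence : IsSlideSequence G f m
  injective : Function.Injective (f m)
  subset_range : F ⊆ Set.range (f m)
  le_edist : ∀ a, ∀ w ∈ F, k ≤ G.edist (f 0 a) w
  le_mul_ncard : m ≤ k * F.ncard

namespace IsTightCover

theorem ncard_slideTimes [Finite α] [DecidablePred (· ∈ F)] (h : IsTightCover G F k f m) (a : α) :
    (slideTimes f m a).ncard = if f m a ∈ F then k else 0 := by
  have := Fintype.ofFinite α
  have hlower : ∀ a ∈ Finset.univ, (if f m a ∈ F then k else 0) ≤ (slideTimes f m a).ncard := by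
    intro a _
    split_ifs with ha
    · exact_mod_cast (h.le_edist a _ ha).trans (h.isSlideSequence.edist_le_ncard_slideTimes a)
    · exact Nat.zero_le _
  have htotal : ∑ a, (if f m a ∈ F then k else 0) = k * F.ncard := by
    rw [← Set.ncard_preimage_of_injective_subset_range h.injective h.subset_range,
      ← Finset.sum_filter, Finset.sum_const, smul_eq_mul, mul_comm, ← Set.ncard_coe_finset]
    simp only [Finset.coe_filter, Finset.mem_univ, true_and, Set.preimage]
  have hupper : ∑ a, (slideTimes f m a).ncard ≤ ∑ a, (if f m a ∈ F then k else 0) :=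
    h.isSlideSequence.sum_ncard_slideTimes_le.trans (h.le_mul_ncard.trans_eq htotal.symm)
  exact ((Finset.sum_eq_sum_iff_of_le hlower).1
    ((Finset.sum_le_sum hlower).antisymm hupper) a (Finset.mem_univ a)).symm

theorem mem_movers_iff [Finite α] (h : IsTightCover G F k f m) (hk : k ≠ 0) :
    a ∈ movers f m ↔ f m a ∈ F := by
  classical
  rw [movers, Set.mem_ofPred_eq, ← Set.ncard_pos (finite_slideTimes f m a), h.ncard_slideTimes]
  split_ifs with ha
  · exact iff_of_true (Nat.pos_of_ne_zero hk) ha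
  · exact iff_of_false (lt_irrefl 0) ha

theorem mem_of_mem_range [Finite α] (h : IsTightCover G F k f m) (hk : k ≠ 0) {w : V}
    (hw : w ∈ Set.range (f m)) (hw₀ : w ∉ Set.range (f 0)) : w ∈ F := by
  obtain ⟨a, rfl⟩ := hw
  refine (h.mem_movers_iff hk).1 (not_not.1 fun ha ↦ hw₀ ⟨a, ?_⟩)
  exact (apply_eq_of_notMem_movers ha).symm

theorem movers_eq_of_subset [Finite α] (h : IsTightCover G F k f m) (hk : k ≠ 0) {Z : Set α}
    (hZ : Z ⊆ movers f m) (hcard : F.ncard ≤ Z.ncard) : movers f m = Z := by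
  have hmovers : movers f m = f m ⁻¹' F := Set.ext fun _ ↦ h.mem_movers_iff hk
  refine (Set.eq_of_subset_of_ncard_le hZ ?_).symm
  rwa [hmovers, Set.ncard_preimage_of_injective_subset_range h.injective h.subset_range]

theorem exists_slideTimes_eq_pair [Finite α] (h : IsTightCover G F 2 f m) (ha : a ∈ movers f m) :
    ∃ i₁ i₂, i₁ < i₂ ∧ slideTimes f m a = {i₁, i₂} ∧
      G.Adj (f 0 a) (f (i₁ + 1) a) ∧ G.Adj (f (i₁ + 1) a) (f m a) := by
  classical
  apply h.isSlideSequence.exists_slideTimes_eq_pair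
  rw [h.ncard_slideTimes, if_pos ((h.mem_movers_iff two_ne_zero).1 ha)]

end IsTightCover

end TokenDiscovery

namespace PathsConstruction

variable {κ n : ℕ} {G : SimpleGraph (Fin κ × Fin n)} {T : Set (Node G)}

/-- The block of a node, if any: `inl i` is the vertex-block for `i` and `inr (i, j)` the edge-block
for the pair `{i, j}`. Exactly the connectors lie in no block. -/
def PreNode.block : PreNode κ n → Option (Fin κ ⊕ Fin κ × Fin κ)
  | vblock i => some (.inl i)
  | vnode i _ _ => some (.inl i)
  | eblock i j => some (.inr (i, j))
  | enode i j _ _ _ => some (.inr (i, j))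
  | conn _ _ _ _ => none

theorem PreNode.exists_eq_conn_of_block_eq_none {w : PreNode κ n} (h : w.block = none) :
    ∃ c d s k, w = conn c d s k := by
  cases w with
  | conn c d s k => exact ⟨c, d, s, k, rfl⟩
  | _ => cases h

theorem block_connFor (i j : Fin κ) (b : Bool) : (connFor (n := n) i j b).block = none := by
  unfold connFor
  split_ifs <;> rfl

theorem Rel.block_eq {u w : PreNode κ n} (h : Rel u w) :
    w.block = none ∨ u.block = w.block := by
  rcases h with ⟨_, _, _, rfl, rfl⟩ | ⟨_, _, _, rfl, rfl⟩ | ⟨_, _, _, _, _, _, _, rfl⟩ |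
    ⟨_, _, _, _, _, _, _, rfl⟩ | ⟨_, _, _, _, _, rfl, rfl⟩ | ⟨_, _, _, _, _, rfl, rfl⟩ |
    ⟨_, _, _, _, _, _, _, rfl⟩ | ⟨_, _, _, _, _, _, _, _, rfl⟩ | ⟨_, _, _, _, _, _, _, _, rfl⟩ |
    ⟨_, _, _, _, _, _, _, _, rfl⟩
  all_goals first
    | exact .inr rfl
    | exact .inl (block_connFor _ _ _)

theorem block_eq_of_adj {u w : Node G} (h : (H G).Adj u w) (hu : u.1.block ≠ none)
    (hw : w.1.block ≠ none) : u.1.block = w.1.block := by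
  rcases ((SimpleGraph.fromRel_adj _ _ _).1 h).2 with h | h
  · exact h.block_eq.resolve_left hw
  · exact (h.block_eq.resolve_left hu).symm

theorem exists_connector_of_adj_adj {u v w : Node G} (huv : (H G).Adj u v)
    (hvw : (H G).Adj v w) (hu : u.1.block ≠ none) (hw : w.1.block ≠ none)
    (hne : u.1.block ≠ w.1.block) : ∃ c d s k, v.1 = PreNode.conn c d s k := by
  refine PreNode.exists_eq_conn_of_block_eq_none (by_contra fun hv ↦ hne ?_)
  exact (block_eq_of_adj huv hu hv).trans (block_eq_of_adj hvw hv hw)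

theorem two_le_edist_of_block_ne {u w : Node G} (hu : u.1.block ≠ none) (hw : w.1.block ≠ none)
    (hne : u.1.block ≠ w.1.block) : 2 ≤ (H G).edist u w := by
  rw [← one_add_one_eq_two, ENat.add_one_le_iff ENat.one_ne_top, ← not_le,
    SimpleGraph.edist_le_one_iff_adj_or_eq]
  rintro (hadj | rfl)
  · exact hne (block_eq_of_adj hadj hu hw)
  · exact hne rfl

variable (G) in
/-- The `p`-th node of the path vertex-gadget for the vertex `x` of class `i`. -/
def vertexGadgetNode (i : Fin κ) (x : Fin n) (p : Fin (n * (κ - 1))) : Node G :=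
  ⟨PreNode.vnode i x p, p.2⟩

/-- The `p`-th node of the path edge-gadget for the edge between the vertex `x` of class `i` and the
vertex `y` of class `j`. -/
def edgeGadgetNode {i j : Fin κ} {x y : Fin n} (hij : i < j) (hxy : G.Adj (i, x) (j, y))
    (p : Fin (2 * n)) : Node G :=
  ⟨PreNode.enode i j x y p, hij, hxy, p.2⟩

variable (G) in
theorem range_vertexGadgetNode (i : Fin κ) (x : Fin n) :
    Set.range (vertexGadgetNode G i x) = vertexGadgetNodes G i x := by
  ext ⟨w, hw⟩
  constructor
  · rintro ⟨p, hp⟩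
    exact ⟨p, congrArg Subtype.val hp.symm⟩
  · rintro ⟨p, rfl⟩
    exact ⟨⟨p, hw⟩, rfl⟩

theorem range_edgeGadgetNode {i j : Fin κ} {x y : Fin n} (hij : i < j)
    (hxy : G.Adj (i, x) (j, y)) :
    Set.range (edgeGadgetNode hij hxy) = edgeGadgetNodes G i j x y := by
  ext ⟨w, hw⟩
  constructor
  · rintro ⟨p, hp⟩
    exact ⟨p, congrArg Subtype.val hp.symm⟩
  · rintro ⟨p, rfl⟩
    exact ⟨⟨p, hw.2.2⟩, rfl⟩

variable (G) in
theorem finite_vertexGadgetNodes (i : Fin κ) (x : Fin n) : (vertexGadgetNodes G i x).Finite :=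
  range_vertexGadgetNode G i x ▸ Set.finite_range _

variable (G) in
theorem ncard_vertexGadgetNodes (i : Fin κ) (x : Fin n) :
    (vertexGadgetNodes G i x).ncard = n * (κ - 1) := by
  have hinj : Function.Injective (vertexGadgetNode G i x) := fun p q h ↦
    Fin.ext (PreNode.vnode.inj (congrArg Subtype.val h)).2.2
  rw [← range_vertexGadgetNode, Set.ncard_range_of_injective hinj, Nat.card_fin]

theorem ncard_edgeGadgetNodes {i j : Fin κ} {x y : Fin n} (hij : i < j)
    (hxy : G.Adj (i, x) (j, y)) : (edgeGadgetNodes G i j x y).ncard = 2 * n := by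
  have hinj : Function.Injective (edgeGadgetNode hij hxy) := fun p q h ↦
    Fin.ext (PreNode.enode.inj (congrArg Subtype.val h)).2.2.2.2
  rw [← range_edgeGadgetNode hij hxy, Set.ncard_range_of_injective hinj, Nat.card_fin]

variable (G) in
theorem edgeGadgetNodes_eq_empty {i j : Fin κ} (hij : ¬i < j) (x y : Fin n) :
    edgeGadgetNodes G i j x y = ∅ := by
  refine Set.eq_empty_of_forall_notMem ?_
  rintro ⟨_, hw⟩ ⟨_, rfl⟩
  exact hij hw.1

variable (G) in
theorem finite_edgeGadgetNodes (i j : Fin κ) (x y : Fin n) :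
    (edgeGadgetNodes G i j x y).Finite := by
  by_cases h : i < j ∧ G.Adj (i, x) (j, y)
  · exact range_edgeGadgetNode h.1 h.2 ▸ Set.finite_range _
  · refine Set.Finite.subset Set.finite_empty ?_
    rintro ⟨_, hw⟩ ⟨_, rfl⟩
    exact h ⟨hw.1, hw.2.1⟩

theorem finite_initialS : (initialS G).Finite := by
  refine (Set.finite_iUnion fun i ↦ Set.finite_iUnion fun x ↦
    finite_vertexGadgetNodes G i x).subset ?_
  rintro w ⟨i, x, hp⟩
  exact Set.mem_iUnion₂.2 ⟨i, x, hp⟩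

theorem adj_vertexGadgetNode {i : Fin κ} {x : Fin n} {p q : Fin (n * (κ - 1))}
    (hpq : (p : ℕ) + 1 = q) :
    (H G).Adj (vertexGadgetNode G i x p) (vertexGadgetNode G i x q) := by
  refine (SimpleGraph.fromRel_adj _ _ _).2 ⟨fun h ↦ ?_, .inl (.inl ⟨i, x, p, rfl, ?_⟩)⟩
  · have := (PreNode.vnode.inj (congrArg Subtype.val h)).2.2
    omega
  · rw [hpq, vertexGadgetNode]

theorem adj_edgeGadgetNode {i j : Fin κ} {x y : Fin n} {hij : i < j} {hxy : G.Adj (i, x) (j, y)}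
    {p q : Fin (2 * n)} (hpq : (p : ℕ) + 1 = q) :
    (H G).Adj (edgeGadgetNode hij hxy p) (edgeGadgetNode hij hxy q) := by
  refine (SimpleGraph.fromRel_adj _ _ _).2
    ⟨fun h ↦ ?_, .inl (.inr (.inr (.inr (.inr (.inl ⟨i, j, x, y, p, rfl, ?_⟩)))))⟩
  · have := (PreNode.enode.inj (congrArg Subtype.val h)).2.2.2.2
    omega
  · rw [hpq, edgeGadgetNode]

variable (G) in
/-- The nodes of the vertex-gadgets selected by choosing the vertex `z i` in each class `i`. -/
def selectedVertexNodes (z : Fin κ → Fin n) : Set (Node G) :=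
  ⋃ i, vertexGadgetNodes G i (z i)

variable (G) in
/-- The nodes of the edge-gadgets selected by choosing, for each pair of classes `i < j`, the edge
with endpoints `e (i, j)`. The values of `e` at other pairs are irrelevant, since they have no
edge-gadgets. -/
def selectedEdgeNodes (e : Fin κ × Fin κ → Fin n × Fin n) : Set (Node G) :=
  ⋃ q : Fin κ × Fin κ, edgeGadgetNodes G q.1 q.2 (e q).1 (e q).2

theorem mem_selectedVertexNodes {z : Fin κ → Fin n} {w : Node G} {i : Fin κ} {x : Fin n}
    (hw : w ∈ vertexGadgetNodes G i x) : w ∈ selectedVertexNodes G z ↔ x = z i := by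
  obtain ⟨p, hp⟩ := hw
  constructor
  · intro hz
    obtain ⟨i', q, hq⟩ := Set.mem_iUnion.1 hz
    obtain ⟨rfl, hx, -⟩ := PreNode.vnode.inj (hp.symm.trans hq)
    exact hx
  · rintro rfl
    exact Set.mem_iUnion.2 ⟨i, p, hp⟩

theorem mem_selectedEdgeNodes {e : Fin κ × Fin κ → Fin n × Fin n} {w : Node G} {i j : Fin κ}
    {x y : Fin n} (hw : w ∈ edgeGadgetNodes G i j x y) :
    w ∈ selectedEdgeNodes G e ↔ (x, y) = e (i, j) := by
  obtain ⟨p, hp⟩ := hw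
  constructor
  · intro he
    obtain ⟨⟨i', j'⟩, q, hq⟩ := Set.mem_iUnion.1 he
    obtain ⟨rfl, rfl, hx, hy, -⟩ := PreNode.enode.inj (hp.symm.trans hq)
    exact Prod.ext hx hy
  · intro hxy
    exact Set.mem_iUnion.2 ⟨(i, j), p, hxy ▸ hp⟩

variable (G) in
theorem ncard_selectedVertexNodes (z : Fin κ → Fin n) :
    (selectedVertexNodes G z).ncard = κ * (n * (κ - 1)) := by
  have hdisj : Pairwise (Function.onFun Disjoint fun i ↦ vertexGadgetNodes G i (z i)) :=
    fun i j hij ↦ Set.disjoint_left.2 fun w ⟨_, hi⟩ ⟨_, hj⟩ ↦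
      hij (PreNode.vnode.inj (hi.symm.trans hj)).1
  rw [selectedVertexNodes,
    Set.ncard_iUnion_of_finite (fun i ↦ finite_vertexGadgetNodes G i (z i)) hdisj,
    finsum_eq_sum_of_fintype]
  simp only [ncard_vertexGadgetNodes, Finset.sum_const, Finset.card_univ, Fintype.card_fin,
    smul_eq_mul]

theorem ncard_selectedEdgeNodes {e : Fin κ × Fin κ → Fin n × Fin n}
    (he : ∀ i j, i < j → G.Adj (i, (e (i, j)).1) (j, (e (i, j)).2)) :
    (selectedEdgeNodes G e).ncard = κ * (n * (κ - 1)) := by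
  have hdisj : Pairwise (Function.onFun Disjoint
      fun q : Fin κ × Fin κ ↦ edgeGadgetNodes G q.1 q.2 (e q).1 (e q).2) :=
    fun q r hqr ↦ Set.disjoint_left.2 fun w ⟨_, hq⟩ ⟨_, hr⟩ ↦
      have h := PreNode.enode.inj (hq.symm.trans hr)
      hqr (Prod.ext h.1 h.2.1)
  have hncard : ∀ i j, (edgeGadgetNodes G i j (e (i, j)).1 (e (i, j)).2).ncard =
      if i < j then 2 * n else 0 := by
    intro i j
    split_ifs with hij
    · exact ncard_edgeGadgetNodes hij (he i j hij)
    · rw [edgeGadgetNodes_eq_empty G hij, Set.ncard_empty]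
  calc (selectedEdgeNodes G e).ncard
      = ∑ q : Fin κ × Fin κ, (edgeGadgetNodes G q.1 q.2 (e q).1 (e q).2).ncard := by
        rw [selectedEdgeNodes, Set.ncard_iUnion_of_finite
          (fun q ↦ finite_edgeGadgetNodes G q.1 q.2 (e q).1 (e q).2) hdisj,
          finsum_eq_sum_of_fintype]
    _ = ∑ j : Fin κ, ∑ i : Fin κ, if i < j then 2 * n else 0 := by
        rw [Fintype.sum_prod_type_right]
        simp only [hncard]
    _ = ∑ j : Fin κ, (j : ℕ) * (2 * n) := by
        simp only [← Finset.sum_filter, Finset.sum_const, smul_eq_mul, Finset.filter_gt_eq_Iio,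
          Fin.card_Iio]
    _ = (∑ j ∈ Finset.range κ, j) * 2 * n := by
        rw [Fin.sum_univ_eq_sum_range (fun j ↦ j * (2 * n)), ← Finset.sum_mul, mul_assoc]
    _ = κ * (n * (κ - 1)) := by
        rw [Finset.sum_range_id_mul_two]
        ring

namespace IsPathsSolution

theorem mem_of_adj (hT : IsPathsSolution G T) {u w : Node G} (hu : u ∈ gadgetNodes G)
    (hw : w ∈ gadgetNodes G) (hadj : (H G).Adj u w) (huT : u ∈ T) : w ∈ T := by
  have hadj' : (SimpleGraph.induce (gadgetNodes G) (H G)).Adj ⟨u, hu⟩ ⟨w, hw⟩ := hadj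
  have ⟨_, _, _, _, hP4⟩ := hT
  exact (hP4 ⟨u, hu⟩).1 huT ⟨w, hw⟩ ⟨hadj'.toWalk, one_le_two⟩

theorem range_subset_of_mem (hT : IsPathsSolution G T) {N : ℕ} {u : Fin N → Node G}
    (hu : ∀ p, u p ∈ gadgetNodes G)
    (hadj : ∀ p q : Fin N, (p : ℕ) + 1 = q → (H G).Adj (u p) (u q)) {p : Fin N} (hp : u p ∈ T) :
    Set.range u ⊆ T := by
  rintro _ ⟨q, rfl⟩
  have hpath : Relation.ReflTransGen (SimpleGraph.pathGraph N).Adj p q :=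
    (SimpleGraph.reachable_iff_reflTransGen p q).1 (SimpleGraph.pathGraph_preconnected N p q)
  induction hpath with
  | refl => exact hp
  | tail _ hstep ih =>
    refine hT.mem_of_adj (hu _) (hu _) ?_ ih
    rcases SimpleGraph.pathGraph_adj.1 hstep with h | h
    · exact hadj _ _ h
    · exact (hadj _ _ h).symm

theorem vertexGadgetNodes_subset (hT : IsPathsSolution G T) {i : Fin κ} {x : Fin n} {w : Node G}
    (hw : w ∈ vertexGadgetNodes G i x) (hwT : w ∈ T) : vertexGadgetNodes G i x ⊆ T := by
  rw [← range_vertexGadgetNode] at hw ⊢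
  obtain ⟨p, rfl⟩ := hw
  exact hT.range_subset_of_mem (fun q ↦ .inl ⟨i, x, q, rfl⟩)
    (fun _ _ ↦ adj_vertexGadgetNode) hwT

theorem edgeGadgetNodes_subset (hT : IsPathsSolution G T) {i j : Fin κ} {x y : Fin n} {w : Node G}
    (hw : w ∈ edgeGadgetNodes G i j x y) (hwT : w ∈ T) : edgeGadgetNodes G i j x y ⊆ T := by
  obtain ⟨hij, hxy, -⟩ : Valid G (.enode i j x y hw.choose) := hw.choose_spec ▸ w.2
  rw [← range_edgeGadgetNode hij hxy] at hw ⊢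
  obtain ⟨p, rfl⟩ := hw
  exact hT.range_subset_of_mem (fun q ↦ .inr ⟨i, j, x, y, q, rfl⟩)
    (fun _ _ ↦ adj_edgeGadgetNode) hwT

theorem exists_disjoint_selectedVertexNodes (hT : IsPathsSolution G T) :
    ∃ z, Disjoint (selectedVertexNodes G z) T := by
  have ⟨_, _, hP2, _⟩ := hT
  choose w hw hwT using hP2
  choose z hz using hw
  refine ⟨z, Set.disjoint_iUnion_left.2 fun i ↦ Set.disjoint_left.2 fun v hv hvT ↦ ?_⟩
  exact hwT i (hT.vertexGadgetNodes_subset hv hvT (hz i))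

theorem exists_selectedEdgeNodes_subset (hT : IsPathsSolution G T) :
    ∃ e : Fin κ × Fin κ → Fin n × Fin n,
      (∀ i j, i < j → G.Adj (i, (e (i, j)).1) (j, (e (i, j)).2)) ∧ selectedEdgeNodes G e ⊆ T := by
  have ⟨_, _, hP2, hP3, _⟩ := hT
  have hpair : ∀ q : Fin κ × Fin κ, ∃ xy : Fin n × Fin n,
      (q.1 < q.2 → G.Adj (q.1, xy.1) (q.2, xy.2)) ∧ edgeGadgetNodes G q.1 q.2 xy.1 xy.2 ⊆ T := by
    rintro ⟨i, j⟩
    by_cases hij : i < j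
    · obtain ⟨⟨_, hw⟩, ⟨x, y, p, rfl⟩, hwT⟩ := hP3 i j hij
      exact ⟨(x, y), fun _ ↦ hw.2.1, hT.edgeGadgetNodes_subset ⟨p, rfl⟩ hwT⟩
    -- `(i, j)` has no edge-gadgets; (P2) provides an element of `Fin n` to return.
    · obtain ⟨_, ⟨x, _⟩, _⟩ := hP2 i
      refine ⟨(x, x), fun h ↦ absurd h hij, ?_⟩
      exact edgeGadgetNodes_eq_empty G hij x x ▸ Set.empty_subset T
  choose e he heT using hpair
  exact ⟨e, fun i j ↦ he (i, j), Set.iUnion_subset heT⟩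

end IsPathsSolution

section IsTightCover

open TokenDiscovery

variable {e : Fin κ × Fin κ → Fin n × Fin n} {z : Fin κ → Fin n} {m : ℕ}
  {f : ℕ → ↥(initialS G) → Node G}

theorem block_ne_of_mem_selectedEdgeNodes {u w : Node G} (hu : u ∈ initialS G)
    (hw : w ∈ selectedEdgeNodes G e) :
    u.1.block ≠ none ∧ w.1.block ≠ none ∧ u.1.block ≠ w.1.block := by
  obtain ⟨i, x, p, hp⟩ := hu
  obtain ⟨q, r, hr⟩ := Set.mem_iUnion.1 hw
  simp [hp, hr, PreNode.block]

theorem isTightCover_selectedEdgeNodes (h0 : f 0 = Subtype.val)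
    (hf : IsSlideSequence (H G) f m) (hinj : Function.Injective (f m))
    (he : selectedEdgeNodes G e ⊆ Set.range (f m))
    (hm : m ≤ 2 * (selectedEdgeNodes G e).ncard) :
    IsTightCover (H G) (selectedEdgeNodes G e) 2 f m where
  isSlideSequence := hf
  injective := hinj
  subset_range := he
  le_mul_ncard := hm
  le_edist a w hw := by
    obtain ⟨ha, hw, hne⟩ := block_ne_of_mem_selectedEdgeNodes a.2 hw
    exact h0 ▸ two_le_edist_of_block_ne ha hw hne

theorem exists_slideTimes_eq_pair_connector
    (hcover : IsTightCover (H G) (selectedEdgeNodes G e) 2 f m) (h0 : f 0 = Subtype.val)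
    {a : ↥(initialS G)} (ha : a ∈ movers f m) :
    ∃ i₁ i₂, i₁ < i₂ ∧ slideTimes f m a = {i₁, i₂} ∧
      ∃ c d s k, (f (i₁ + 1) a).1 = PreNode.conn c d s k := by
  have := finite_initialS (G := G).to_subtype
  obtain ⟨i₁, i₂, hlt, hpair, hadj₁, hadj₂⟩ := hcover.exists_slideTimes_eq_pair ha
  obtain ⟨hu, hw, hne⟩ := block_ne_of_mem_selectedEdgeNodes a.2
    ((hcover.mem_movers_iff two_ne_zero).1 ha)
  rw [h0] at hadj₁
  exact ⟨i₁, i₂, hlt, hpair, exists_connector_of_adj_adj hadj₁ hadj₂ hu hw hne⟩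

theorem edgeGadgetNodes_inter_range_eq_empty
    (hcover : IsTightCover (H G) (selectedEdgeNodes G e) 2 f m) (h0 : f 0 = Subtype.val)
    {i j : Fin κ} {x y : Fin n} (hne : (x, y) ≠ e (i, j)) :
    edgeGadgetNodes G i j x y ∩ Set.range (f m) = ∅ := by
  have := finite_initialS (G := G).to_subtype
  refine Set.eq_empty_of_forall_notMem fun w ⟨hw, hwm⟩ ↦ hne ?_
  refine (mem_selectedEdgeNodes hw).1 (hcover.mem_of_mem_range two_ne_zero hwm ?_)
  rw [h0, Subtype.range_coe]
  rintro ⟨i', x', p', hp'⟩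
  obtain ⟨p, hp⟩ := hw
  cases hp.symm.trans hp'

theorem movers_eq_preimage_selectedVertexNodes
    (hcover : IsTightCover (H G) (selectedEdgeNodes G e) 2 f m) (h0 : f 0 = Subtype.val)
    (he : ∀ i j, i < j → G.Adj (i, (e (i, j)).1) (j, (e (i, j)).2))
    (hz : Disjoint (selectedVertexNodes G z) (Set.range (f m))) :
    movers f m = Subtype.val ⁻¹' selectedVertexNodes G z := by
  have := finite_initialS (G := G).to_subtype
  have hsub : selectedVertexNodes G z ⊆ Set.range (Subtype.val : ↥(initialS G) → Node G) := by
    rw [Subtype.range_coe]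
    exact Set.iUnion_subset fun i _ hw ↦ ⟨i, z i, hw⟩
  refine hcover.movers_eq_of_subset two_ne_zero (fun a ha ↦ by_contra fun hstay ↦ ?_) ?_
  · have hfinal : f m a = a := (apply_eq_of_notMem_movers hstay).trans (congrFun h0 a)
    exact Set.disjoint_left.1 hz ha ⟨a, hfinal⟩
  · rw [Set.ncard_preimage_of_injective_subset_range Subtype.val_injective hsub,
      ncard_selectedVertexNodes, ncard_selectedEdgeNodes he]

variable (G) in
theorem ncard_preimage_vertexGadgetNodes (i : Fin κ) (x : Fin n) :
    ((Subtype.val : ↥(initialS G) → Node G) ⁻¹' vertexGadgetNodes G i x).ncard = n * (κ - 1) := by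
  rw [Set.ncard_preimage_of_injective_subset_range Subtype.val_injective,
    ncard_vertexGadgetNodes]
  rw [Subtype.range_coe]
  exact fun _ hw ↦ ⟨i, x, hw⟩

end IsTightCover

end PathsConstruction

open PathsConstruction in
/-- Properties of any transformation sequence of at most `2n(κ−1)κ` token
slides moving the initial configuration to a paths solution `T`:
(i) every token that moves performs exactly two token slides and its
intermediate vertex is a green connector node; (ii) for each edge-block, `T`
contains all `2n` nodes of exactly one edge-gadget of that block; (iii) for
each vertex-block, exactly `n(κ−1)` tokens slide, all coming from exactly one
vertex-gadget of that block. -/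
theorem paths_solution_sequence_structure {κ n : ℕ} (G : SimpleGraph (Fin κ × Fin n))
    (T : Set (Node G)) (hT : IsPathsSolution G T)
    (m : ℕ) (f : ℕ → ↥(initialS G) → Node G)
    (hm : m ≤ 2 * n * (κ - 1) * κ)
    (h0 : f 0 = fun a => Subtype.val a)
    (hstep : ∀ i : ℕ, i < m → TokenDiscovery.Step (H G) (f i) (f (i + 1)))
    (hinj : Function.Injective (f m)) (hrange : Set.range (f m) = T) :
    -- (i)
    (∀ a : ↥(initialS G), ({i : ℕ | i < m ∧ f (i + 1) a ≠ f i a}).Nonempty →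
        ∃ i₁ i₂ : ℕ, i₁ < i₂ ∧ {i : ℕ | i < m ∧ f (i + 1) a ≠ f i a} = {i₁, i₂} ∧
          ∃ c d s k, (f (i₁ + 1) a).1 = PreNode.conn c d s k) ∧
    -- (ii)
    (∀ i j : Fin κ, i < j → ∃ x y : Fin n, G.Adj (i, x) (j, y) ∧
        edgeGadgetNodes G i j x y ⊆ T ∧
        ∀ x' y' : Fin n, G.Adj (i, x') (j, y') → (x', y') ≠ (x, y) →
          edgeGadgetNodes G i j x' y' ∩ T = ∅) ∧
    -- (iii)
    (∀ i : Fin κ, ∃ x : Fin n,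
        (∀ a : ↥(initialS G), (∃ p, (a : Node G).1 = PreNode.vnode i x p) →
            ∃ s : ℕ, s < m ∧ f (s + 1) a ≠ f s a) ∧
        (∀ a : ↥(initialS G), ∀ x' : Fin n, x' ≠ x →
            (∃ p, (a : Node G).1 = PreNode.vnode i x' p) →
            ∀ s : ℕ, s < m → f (s + 1) a = f s a) ∧
        {a : ↥(initialS G) | (∃ p, (a : Node G).1 = PreNode.vnode i x p) ∧
            ∃ s : ℕ, s < m ∧ f (s + 1) a ≠ f s a}.ncard = n * (κ - 1)) := by
  subst hrange
  obtain ⟨z, hz⟩ := hT.exists_disjoint_selectedVertexNodes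
  obtain ⟨e, he, hsub⟩ := hT.exists_selectedEdgeNodes_subset
  have hcover : TokenDiscovery.IsTightCover (H G) (selectedEdgeNodes G e) 2 f m := by
    refine isTightCover_selectedEdgeNodes h0 hstep hinj hsub (hm.trans_eq ?_)
    rw [ncard_selectedEdgeNodes he]
    ring
  have hmovers : ∀ {i x} {a : ↥(initialS G)}, a.1 ∈ vertexGadgetNodes G i x →
      (a ∈ TokenDiscovery.movers f m ↔ x = z i) := by
    intro i x a ha
    rw [movers_eq_preimage_selectedVertexNodes hcover h0 he hz]
    exact mem_selectedVertexNodes ha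
  refine ⟨fun a ha ↦ exists_slideTimes_eq_pair_connector hcover h0 ha, fun i j hij ↦ ?_,
    fun i ↦ ⟨z i, fun a ha ↦ (hmovers ha).2 rfl, fun a x hx ha s hs ↦ ?_, ?_⟩⟩
  · exact ⟨(e (i, j)).1, (e (i, j)).2, he i j hij,
      (Set.subset_iUnion _ (i, j)).trans hsub,
      fun x y _ hne ↦ edgeGadgetNodes_inter_range_eq_empty hcover h0 hne⟩
  · exact not_not.1 fun hmove ↦ hx ((hmovers ha).1 ⟨s, hs, hmove⟩)
  · rw [← ncard_preimage_vertexGadgetNodes G i (z i)]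
    exact congrArg Set.ncard (Set.ext fun a ↦ and_iff_left_of_imp fun ha ↦ (hmovers ha).2 rfl)
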